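/- Let f ∈ L¹[0,1] and ε > 0. Then there exists C > 0 such that for every interval I ⊆ [0,1] and every median μ_I of f on I with |μ_I| ≥ C, one has ∫_I |f| dλ ≤ ε. -/

import Mathlib

/-!
If `μ` is a median of `f` on `I`, then `|f| ≥ |μ|` on at least half of `I`: on `{f ≥ μ}` if `μ ≥ 0`,
on `{f ≤ μ}` if `μ ≤ 0`. By Markov's inequality the set where `|f| ≥ C` is small for large `C`, so a
median with `|μ| ≥ C` forces `I` itself to be small, and then `∫_I |f|` is small by absolute
continuity of the integral.
-/

open MeasureTheory Filter Set
open scoped ENNReal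

noncomputable section

/-- `μ` is a median of `f` on the set `I` with respect to Lebesgue measure. -/
def IsMedianOn (f : ℝ → ℝ) (I : Set ℝ) (μ : ℝ) : Prop :=
  volume {x ∈ I | f x < μ} ≤ volume I / 2 ∧ volume {x ∈ I | μ < f x} ≤ volume I / 2

/-- `c` is a median of `f` on the set `s` with respect to the measure `m`; for `m = volume` on
`ℝ` this unfolds to `IsMedianOn`. It allows `f` to live on any measure space. -/
def IsMedianWrt {α β : Type*} [MeasurableSpace α] [LT β] (m : Measure α) (f : α → β) (s : Set α)
    (c : β) : Prop :=
  m {x ∈ s | f x < c} ≤ m s / 2 ∧ m {x ∈ s | c < f x} ≤ m s / 2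

section

variable {α E : Type*} [MeasurableSpace α] [NormedAddCommGroup E] {m : Measure α} {s t u : Set α}

theorem measure_le_two_mul_of_subset_union (hs : m s ≠ ∞) (hsub : s ⊆ t ∪ u)
    (ht : m t ≤ m s / 2) : m s ≤ 2 * m u := by
  have hhalf : m s / 2 ≤ m u := by
    refine (ENNReal.add_le_add_iff_left (ENNReal.div_ne_top hs two_ne_zero)).1 ?_
    calc m s / 2 + m s / 2 = m s := ENNReal.add_halves _
      _ ≤ m t + m u := (measure_mono hsub).trans (measure_union_le _ _)
      _ ≤ m s / 2 + m u := by gcongr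
  calc m s = 2 * (m s / 2) := by rw [two_mul, ENNReal.add_halves]
    _ ≤ 2 * m u := by gcongr

theorem IsMedianWrt.measure_le_two_mul_measure_abs_le {β : Type*} [AddCommGroup β] [LinearOrder β]
    [AddLeftMono β] {f : α → β} {c : β} (hc : IsMedianWrt m f s c) (hs : m s ≠ ∞) :
    m s ≤ 2 * m {x ∈ s | |c| ≤ |f x|} := by
  rcases le_total 0 c with hc₀ | hc₀
  · refine measure_le_two_mul_of_subset_union hs (fun x hx => ?_) hc.1
    exact (lt_or_ge (f x) c).imp (⟨hx, ·⟩) (⟨hx, abs_le_abs_of_nonneg hc₀ ·⟩)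
  · refine measure_le_two_mul_of_subset_union hs (fun x hx => ?_) hc.2
    exact (lt_or_ge c (f x)).imp (⟨hx, ·⟩) (⟨hx, abs_le_abs_of_nonpos hc₀ ·⟩)

theorem exists_pos_measure_le_norm_lt {f : α → E} (hf : Integrable f m) {δ : ℝ≥0∞} (hδ : 0 < δ) :
    ∃ C : ℝ, 0 < C ∧ m {x | C ≤ ‖f x‖} < δ := by
  have markov (C : ℝ) (hC : 0 < C) :
      m {x | C ≤ ‖f x‖} ≤ (∫⁻ x, ‖f x‖ₑ ∂m) / ENNReal.ofReal C := by
    simpa only [← ofReal_norm, ENNReal.ofReal_le_ofReal_iff (norm_nonneg _)] using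
      meas_ge_le_lintegral_div hf.1.enorm (ENNReal.ofReal_pos.2 hC).ne' ENNReal.ofReal_ne_top
  have hlim : Tendsto (fun C : ℝ => (∫⁻ x, ‖f x‖ₑ ∂m) / ENNReal.ofReal C) atTop (nhds 0) := by
    simpa only [ENNReal.div_top] using
      ENNReal.Tendsto.const_div ENNReal.tendsto_ofReal_atTop (Or.inr hf.2.ne)
  obtain ⟨C, hC, hCδ⟩ := ((eventually_gt_atTop 0).and (hlim.eventually_lt_const hδ)).exists
  exact ⟨C, hC, (markov C hC).trans_lt hCδ⟩

theorem exists_pos_forall_setIntegral_norm_lt {f : α → E} (hf : Integrable f m) {ε : ℝ}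
    (hε : 0 < ε) : ∃ δ > 0, ∀ s, m s < δ → ∫ x in s, ‖f x‖ ∂m < ε := by
  obtain ⟨δ, hδ, hsmall⟩ :=
    exists_pos_setLIntegral_lt_of_measure_lt hf.2.ne (ENNReal.ofReal_pos.2 hε).ne'
  refine ⟨δ, hδ, fun s hs => ?_⟩
  rw [integral_norm_eq_lintegral_enorm hf.1.restrict]
  exact ENNReal.toReal_lt_of_lt_ofReal (hsmall s hs)

theorem statement_10_general {f : α → ℝ} (hf : IntegrableOn f t m) {ε : ℝ} (hε : 0 < ε) :
    ∃ C : ℝ, 0 < C ∧ ∀ s ⊆ t, m s ≠ ∞ → ∀ c : ℝ, IsMedianWrt m f s c → C ≤ |c| →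
      ∫ x in s, |f x| ∂m ≤ ε := by
  obtain ⟨δ, hδ, hsmall⟩ := exists_pos_forall_setIntegral_norm_lt hf hε
  obtain ⟨C, hC, htail⟩ := exists_pos_measure_le_norm_lt hf (ENNReal.half_pos hδ.ne')
  refine ⟨C, hC, fun s hst hs c hc hCc => ?_⟩
  have hsδ : m s < δ := calc
    m s ≤ 2 * m {x ∈ s | |c| ≤ |f x|} := hc.measure_le_two_mul_measure_abs_le hs
    _ = 2 * m.restrict t {x ∈ s | |c| ≤ |f x|} := by
      rw [Measure.restrict_eq_self _ ((sep_subset _ _).trans hst)]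
    _ ≤ 2 * m.restrict t {x | C ≤ ‖f x‖} := by
      gcongr 2 * m.restrict t ?_
      exact fun x hx => hCc.trans hx.2
    _ < 2 * (δ / 2) := ENNReal.mul_lt_mul_right two_ne_zero ENNReal.ofNat_ne_top htail
    _ = δ := ENNReal.mul_div_cancel two_ne_zero ENNReal.ofNat_ne_top
  have hint := hsmall s (by rwa [Measure.restrict_eq_self _ hst])
  rw [Measure.restrict_restrict_of_subset hst] at hint
  exact hint.le

end

theorem statement_10
    (f : ℝ → ℝ) (hf : IntegrableOn f (Set.Icc 0 1))
    (ε : ℝ) (hε : 0 < ε) :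
    ∃ C : ℝ, 0 < C ∧
      ∀ I : Set ℝ, I ⊆ Set.Icc 0 1 → I.OrdConnected →
        ∀ μ : ℝ, IsMedianOn f I μ → C ≤ |μ| →
          (∫ t in I, |f t|) ≤ ε := by
  obtain ⟨C, hC, hbound⟩ := statement_10_general hf hε
  exact ⟨C, hC, fun I hI _ => hbound I hI (measure_ne_top_of_subset hI measure_Icc_lt_top.ne)⟩
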